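/- Let k ≥ 1 and m = 2^k. Suppose μ(n, m − 1) = U(n, m − 1) holds for all positive integers n. Then μ(n, p) = U(n, p) holds for all positive integers n, for both p = m and p = m + 1; in particular μ(n, m) = μ(n, m + 1) for all positive integers n. -/

import Mathlib

/-!
The quantity `μ(n, m)` depends only on column combinations: it is a minimum, over binary linear
codes in which every coordinate is covered by a generator of weight at most `m`, of the largest
weight of a codeword.

**Upper bound.** The simplex code of length `2^(l+1) - 1` has all nonzero weights equal to `2^l`,
and it is generated by columns of a matrix with unit diagonal (`attains_simplex`). Direct sums of
such codes, following the recursion for `aseq`, give `μ(n, 2^k) ≤ U(n, 2^k)`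
(`exists_Mfun_le_Ubd`). Since `A(n, m) ⊆ A(n, m + 1)`, it remains to bound `M(W, 0)` from below
by `U(n, m)` for `W ∈ A(n, m + 1)`, where `m = 2^k` (`Ubd_le_Mfun`).

**Lower bound.** Choose a largest family `P` of columns of weight `m + 1` with disjoint supports,
and then a largest family `Q` of columns having `m` points outside the union `T` of `P`, disjoint
outside `T`. Put `J = |P| + |Q|` and let `R` be the set of rows met neither by `P` nor by `Q`. By
maximality every column has weight at most `m - 1` on `R` (`exists_large_families`). Write
`n = (2m - 1) q + r` with `0 ≤ r < 2m - 1`, so that `U(n, m) = q m + a(r)` and `a(r) ≤ m`.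

* If `J ≤ q`, use the hypothesis on `μ(·, m - 1)` to light `U(|R|, m - 1)` rows of `R`, then add
  columns of `Q` and of `P` to light at least half of each of their blocks (`exists_half`). This
  lights at least `U(n - J m - |P|, m - 1) + J m / 2 + |P|` rows. Since `U(·, m - 1)` has
  increments `0` or `1`, gains `m / 2` over each period `m - 1`, and dominates `a` on
  `[0, 2m - 2]`, this is at least `U(n, m)` (`Ubd_le_of_few`).
* If `J ≥ q + 1`, add up all columns in `P` and `Q`. A column of `Q` has at most one point in `T`,
  and the columns of `Q` meeting the support of a fixed `u ∈ P` all do so at one point, since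
  otherwise two of them could replace `u` in `P`. Hence at least `m` rows are lit in each block of
  `P` and of `Q`, altogether `J m ≥ (q + 1) m ≥ U(n, m)`.
-/

open Matrix

/-- `Mfun W c` is `M(W,c)`: the maximum of `|W·x + c|` over all `x ∈ 𝔽₂ⁿ`. -/
def Mfun {n : ℕ} (W : Matrix (Fin n) (Fin n) (ZMod 2)) (c : Fin n → ZMod 2) : ℕ :=
  Finset.univ.sup fun x : Fin n → ZMod 2 => hammingNorm (W.mulVec x + c)

/-- `Aset n m`: matrices with all diagonal entries 1 and every column of Hamming weight ≤ m. -/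
def Aset (n m : ℕ) : Set (Matrix (Fin n) (Fin n) (ZMod 2)) :=
  {W | (∀ i, W i i = 1) ∧ ∀ j, hammingNorm (fun i => W i j) ≤ m}

/-- `AstarSet n m`: matrices with all diagonal entries 1 and every column of Hamming weight
exactly m. -/
def AstarSet (n m : ℕ) : Set (Matrix (Fin n) (Fin n) (ZMod 2)) :=
  {W | (∀ i, W i i = 1) ∧ ∀ j, hammingNorm (fun i => W i j) = m}

/-- `μ(n,m) = min { M(W,0) : W ∈ A(n,m) }`. -/
noncomputable def mu (n m : ℕ) : ℕ := sInf ((fun W => Mfun W 0) '' Aset n m)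

/-- `μ*(n,m) = min { M(W,0) : W ∈ A*(n,m) }`. -/
noncomputable def muStar (n m : ℕ) : ℕ := sInf ((fun W => Mfun W 0) '' AstarSet n m)

/-- `ν(n,m) = min { M(W,c) : W ∈ A(n,m), c ∈ 𝔽₂ⁿ }`. -/
noncomputable def nu (n m : ℕ) : ℕ := sInf {t | ∃ W ∈ Aset n m, ∃ c, Mfun W c = t}

/-- `ν*(n,m) = min { M(W,c) : W ∈ A*(n,m), c ∈ 𝔽₂ⁿ }`. -/
noncomputable def nuStar (n m : ℕ) : ℕ := sInf {t | ∃ W ∈ AstarSet n m, ∃ c, Mfun W c = t}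

/-- The sequence `a` from the paper: `a(1)=1`, `a(2^k−1+i)=2^{k−1}+a(i)` for `1 ≤ i ≤ 2^k−1`,
and `a(2^{k+1}−1)=2^k`.  (For `2^k ≤ n ≤ 2^{k+1}-1` we have `Nat.log2 n = k`.) -/
def aseq : ℕ → ℕ
  | 0 => 0
  | 1 => 1
  | (n+2) =>
    let k := Nat.log2 (n+2)
    if n + 2 = 2^(k+1) - 1 then 2^k
    else 2^(k-1) + aseq ((n+2) - (2^k - 1))
decreasing_by
  have hk : 1 ≤ Nat.log2 (n+2) := by
    rw [Nat.le_log2 (by omega)]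
    omega
  have h2 : 2 ≤ 2 ^ Nat.log2 (n+2) := by
    calc (2:ℕ) = 2^1 := rfl
    _ ≤ _ := Nat.pow_le_pow_right (by norm_num) hk
  omega

/-- The upper bound `U(n,m)`: with `k` such that `2^k ≤ m < 2^{k+1}` and
`n = (2^{k+1}−1)q + r`, `q ≥ 0`, `1 ≤ r ≤ 2^{k+1}−1`, set `U(n,m) = q·2^k + a(r)`. -/
def Ufun (n m : ℕ) : ℕ :=
  let k := Nat.log2 m
  let p := 2^(k+1) - 1
  ((n-1)/p) * 2^k + aseq ((n-1) % p + 1)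

/-! ### Arithmetic of the bound `U` -/

lemma aseq_zero : aseq 0 = 0 := by simp [aseq]

lemma aseq_add (l i : ℕ) (hi : i ≤ 2 ^ (l + 1) - 1) :
    aseq (2 ^ (l + 1) - 1 + i) = 2 ^ l + aseq i := by
  have h2 : 1 ≤ 2 ^ l := Nat.one_le_two_pow
  have h3 : 2 ^ (l + 1) = 2 * 2 ^ l := by ring
  rcases Nat.eq_zero_or_pos i with rfl | hi0
  · rcases l with _ | l
    · change aseq 1 = 1 + aseq 0
      rw [aseq, aseq]
    · have h4 : 2 ^ (l + 1) = 2 * 2 ^ l := by ring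
      have h5 : 1 ≤ 2 ^ l := Nat.one_le_two_pow
      obtain ⟨N, hN⟩ : ∃ N, 2 ^ (l + 1 + 1) - 1 + 0 = N + 2 := ⟨2 ^ (l + 1 + 1) - 3, by omega⟩
      have hlog : Nat.log2 (N + 2) = l + 1 := by
        rw [Nat.log2_eq_iff (by omega)]
        omega
      rw [hN, aseq_zero, aseq, hlog, if_pos (by omega), add_zero]
  · obtain ⟨N, hN⟩ : ∃ N, 2 ^ (l + 1) - 1 + i = N + 2 := ⟨2 ^ (l + 1) - 1 + i - 2, by omega⟩
    have h4 : 2 ^ (l + 1 + 1) = 2 * 2 ^ (l + 1) := by ring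
    have hlog : Nat.log2 (N + 2) = l + 1 := by
      rw [Nat.log2_eq_iff (by omega)]
      omega
    rw [hN, aseq, hlog, if_neg (by omega)]
    have h5 : N + 2 - (2 ^ (l + 1) - 1) = i := by omega
    rw [h5]
    simp

lemma aseq_mersenne (l : ℕ) : aseq (2 ^ (l + 1) - 1) = 2 ^ l := by
  simpa [aseq_zero] using aseq_add l 0 (Nat.zero_le _)

/-- Every positive integer is `2^(l+1) - 1 + i` with `i ≤ 2^(l+1) - 1`, the shape in which
`aseq_add` computes `aseq`. -/
lemma exists_mersenne_add (n : ℕ) (hn : 1 ≤ n) :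
    ∃ l i, i ≤ 2 ^ (l + 1) - 1 ∧ n = 2 ^ (l + 1) - 1 + i := by
  have hlog : 1 ≤ Nat.log2 (n + 1) := by
    rw [Nat.le_log2 (by omega)]
    omega
  obtain ⟨l, hl⟩ : ∃ l, Nat.log2 (n + 1) = l + 1 := ⟨Nat.log2 (n + 1) - 1, by omega⟩
  rw [Nat.log2_eq_iff (by omega)] at hl
  have h4 : 2 ^ (l + 1 + 1) = 2 * 2 ^ (l + 1) := by ring
  exact ⟨l, n - (2 ^ (l + 1) - 1), by omega, by omega⟩

lemma aseq_step (n : ℕ) : aseq n ≤ aseq (n + 1) ∧ aseq (n + 1) ≤ aseq n + 1 := by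
  induction n using Nat.strong_induction_on with
  | _ n ih =>
    rcases Nat.eq_zero_or_pos n with rfl | hn
    · simp [aseq]
    · obtain ⟨l, i, hi, rfl⟩ := exists_mersenne_add n hn
      have h2 : 1 ≤ 2 ^ l := Nat.one_le_two_pow
      have h3 : 2 ^ (l + 1) = 2 * 2 ^ l := by ring
      have h4 : 2 ^ (l + 1 + 1) = 2 * 2 ^ (l + 1) := by ring
      rcases hi.lt_or_eq with hlt | rfl
      · have := ih i (by omega)
        rw [add_assoc, aseq_add l i hi, aseq_add l (i + 1) (by omega)]
        omega
      · have h5 : 2 ^ (l + 1) - 1 + (2 ^ (l + 1) - 1) + 1 = 2 ^ (l + 1 + 1) - 1 := by omega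
        rw [h5, aseq_add l _ le_rfl, aseq_mersenne, aseq_mersenne]
        omega

lemma aseq_mono : Monotone aseq := monotone_nat_of_le_succ fun n => (aseq_step n).1

lemma aseq_le (k r : ℕ) (hr : r ≤ 2 ^ (k + 1) - 1) : aseq r ≤ 2 ^ k :=
  aseq_mersenne k ▸ aseq_mono hr

/-- The bound `U(n, m)` for `2^k ≤ m < 2^(k+1)`, written with remainders in `[0, 2^(k+1) - 2]`
so that it takes the natural value `0` at `n = 0`, unlike `Ufun`. -/
def Ubd (k n : ℕ) : ℕ := n / (2 ^ (k + 1) - 1) * 2 ^ k + aseq (n % (2 ^ (k + 1) - 1))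

lemma two_pow_sub_one_pos (k : ℕ) : 0 < 2 ^ (k + 1) - 1 := by
  have h2 : 1 ≤ 2 ^ k := Nat.one_le_two_pow
  have h3 : 2 ^ (k + 1) = 2 * 2 ^ k := by ring
  omega

lemma Ubd_add (k n : ℕ) : Ubd k (n + (2 ^ (k + 1) - 1)) = Ubd k n + 2 ^ k := by
  unfold Ubd
  rw [Nat.add_div_right _ (two_pow_sub_one_pos k), Nat.add_mod_right]
  ring

lemma Ubd_add_mul (k n q : ℕ) : Ubd k (n + q * (2 ^ (k + 1) - 1)) = Ubd k n + q * 2 ^ k := by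
  induction q with
  | zero => simp
  | succ q ih => rw [Nat.succ_mul, ← add_assoc, Ubd_add, ih]; ring

lemma Ubd_of_lt {k n : ℕ} (hn : n < 2 ^ (k + 1) - 1) : Ubd k n = aseq n := by
  simp [Ubd, Nat.div_eq_of_lt hn, Nat.mod_eq_of_lt hn]

lemma Ubd_succ (k n : ℕ) :
    Ubd k (n + 1) = n / (2 ^ (k + 1) - 1) * 2 ^ k + aseq (n % (2 ^ (k + 1) - 1) + 1) := by
  have hp := two_pow_sub_one_pos k
  have hlt := Nat.mod_lt n hp
  have key : n + 1 = (n % (2 ^ (k + 1) - 1) + 1) + n / (2 ^ (k + 1) - 1) * (2 ^ (k + 1) - 1) := by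
    have := Nat.mod_add_div' n (2 ^ (k + 1) - 1)
    omega
  rw [key, Ubd_add_mul]
  rcases Nat.lt_or_ge (n % (2 ^ (k + 1) - 1) + 1) (2 ^ (k + 1) - 1) with h | h
  · rw [Ubd_of_lt h]; ring
  · have h' : n % (2 ^ (k + 1) - 1) + 1 = 0 + (2 ^ (k + 1) - 1) := by omega
    rw [h', Ubd_add, Ubd_of_lt hp, zero_add, aseq_mersenne, aseq_zero]
    ring

lemma Ubd_step (k n : ℕ) : Ubd k n ≤ Ubd k (n + 1) ∧ Ubd k (n + 1) ≤ Ubd k n + 1 := by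
  have := aseq_step (n % (2 ^ (k + 1) - 1))
  rw [Ubd_succ]
  unfold Ubd
  omega

lemma Ubd_mono (k : ℕ) : Monotone (Ubd k) := monotone_nat_of_le_succ fun n => (Ubd_step k n).1

lemma Ubd_add_le (k n t : ℕ) : Ubd k (n + t) ≤ Ubd k n + t := by
  induction t with
  | zero => simp
  | succ t ih =>
    have := (Ubd_step k (n + t)).2
    rw [← add_assoc]
    omega

lemma Ufun_eq_Ubd {k n m : ℕ} (hn : 1 ≤ n) (h1 : 2 ^ k ≤ m) (h2 : m < 2 ^ (k + 1)) :
    Ufun n m = Ubd k n := by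
  have hlog : Nat.log2 m = k := by
    have := Nat.one_le_two_pow (n := k)
    rw [Nat.log2_eq_iff (by omega)]
    exact ⟨h1, h2⟩
  obtain ⟨n, rfl⟩ : ∃ a, n = a + 1 := ⟨n - 1, by omega⟩
  rw [Ubd_succ]
  simp [Ufun, hlog]

lemma aseq_le_Ubd (j r : ℕ) (hr : r < 2 ^ (j + 2) - 1) : aseq r ≤ Ubd j r := by
  rcases Nat.lt_or_ge r (2 ^ (j + 1) - 1) with h | h
  · rw [Ubd_of_lt h]
  · have h2 : 1 ≤ 2 ^ j := Nat.one_le_two_pow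
    have h3 : 2 ^ (j + 1) = 2 * 2 ^ j := by ring
    have h4 : 2 ^ (j + 2) = 4 * 2 ^ j := by ring
    obtain ⟨i, rfl⟩ := Nat.exists_eq_add_of_le h
    rw [aseq_add j i (by omega), add_comm (2 ^ (j + 1) - 1), Ubd_add]
    rcases Nat.lt_or_ge i (2 ^ (j + 1) - 1) with h | h
    · rw [Ubd_of_lt h]; omega
    · obtain rfl : i = 0 + (2 ^ (j + 1) - 1) := by omega
      rw [Ubd_add, zero_add, aseq_mersenne]
      omega

/-- The comparison of `U(·, 2^(j+1))` with `U(·, 2^(j+1) - 1)` needed when `J = t + s` columns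
of large weight, with `J` at most the quotient `n / (2^(j+2) - 1)`, are split off: `t` of them
take `2^(j+1) + 1` rows each, the other `s` take `2^(j+1)`, and `R` rows remain. -/
lemma Ubd_le_of_few (j n t s R : ℕ) (hn : R + t * (2 ^ (j + 1) + 1) + s * 2 ^ (j + 1) = n)
    (hJ : t + s ≤ n / (2 ^ (j + 2) - 1)) :
    Ubd (j + 1) n ≤ Ubd j R + t * (2 ^ j + 1) + s * 2 ^ j := by
  have hp := two_pow_sub_one_pos (j + 1)
  have hmod := Nat.mod_lt n hp
  have hdm := Nat.mod_add_div' n (2 ^ (j + 2) - 1)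
  unfold Ubd
  change n / (2 ^ (j + 2) - 1) * 2 ^ (j + 1) + aseq (n % (2 ^ (j + 2) - 1)) ≤ _
  change n % (2 ^ (j + 2) - 1) < 2 ^ (j + 2) - 1 at hmod
  have hr := aseq_le_Ubd j _ hmod
  generalize n / (2 ^ (j + 2) - 1) = q at *
  generalize n % (2 ^ (j + 2) - 1) = r at *
  change _ ≤ Ubd j R + t * (2 ^ j + 1) + s * 2 ^ j
  obtain ⟨e, rfl⟩ := Nat.exists_eq_add_of_le hJ
  have h2 : 1 ≤ 2 ^ j := Nat.one_le_two_pow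
  have h3 : 2 ^ (j + 1) = 2 * 2 ^ j := by ring
  have h4 : 2 ^ (j + 2) = 4 * 2 ^ j := by ring
  rw [h4] at hdm
  rw [h3] at hn ⊢
  have hR : R + t = (r + e) + (t + s + 2 * e) * (2 ^ (j + 1) - 1) := by
    rw [h3]
    obtain ⟨a, ha⟩ := Nat.exists_eq_add_of_le h2
    rw [ha] at hdm hn ⊢
    have e1 : 4 * (1 + a) - 1 = 4 * a + 3 := by omega
    have e2 : 2 * (1 + a) - 1 = 2 * a + 1 := by omega
    rw [e1] at hdm
    rw [e2]
    nlinarith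
  have h5 := Ubd_add_le j R t
  rw [hR, Ubd_add_mul] at h5
  have h6 := Ubd_mono j (Nat.le_add_right r e)
  nlinarith
/-! ### Block sums of simplex codes -/

/-- Over an arbitrary finite index type: some matrix with unit diagonal and columns of weight at
most `m` has all its column combinations of weight at most `b`. -/
def Attains (ι : Type) [Fintype ι] (m b : ℕ) : Prop :=
  ∃ W : Matrix ι ι (ZMod 2), (∀ i, W i i = 1) ∧ (∀ j, hammingNorm (fun i => W i j) ≤ m) ∧
    ∀ x : ι → ZMod 2, hammingNorm (W.mulVec x) ≤ b

lemma hammingNorm_comp_equiv {ι κ : Type} [Fintype ι] [Fintype κ] (e : ι ≃ κ)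
    (f : κ → ZMod 2) : hammingNorm (fun i => f (e i)) = hammingNorm f := by
  unfold hammingNorm
  exact Finset.card_equiv e (by simp)

lemma hammingNorm_sum {ι κ : Type} [Fintype ι] [Fintype κ] (f : ι ⊕ κ → ZMod 2) :
    hammingNorm f =
      hammingNorm (fun i => f (Sum.inl i)) + hammingNorm (fun i => f (Sum.inr i)) := by
  unfold hammingNorm
  simp only [Finset.card_filter, Fintype.sum_sum_type]

lemma Attains.equiv {ι κ : Type} [Fintype ι] [Fintype κ] {m b : ℕ} (e : ι ≃ κ)
    (h : Attains ι m b) : Attains κ m b := by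
  obtain ⟨W, h1, h2, h3⟩ := h
  refine ⟨W.submatrix e.symm e.symm, fun i => h1 _, fun j => ?_, fun x => ?_⟩
  · exact (hammingNorm_comp_equiv e.symm (fun i => W i (e.symm j))).trans_le (h2 _)
  · rw [Matrix.submatrix_mulVec_equiv]
    exact (hammingNorm_comp_equiv e.symm (W.mulVec (x ∘ e.symm.symm))).trans_le (h3 _)

lemma Attains.sum {ι κ : Type} [Fintype ι] [Fintype κ] {m b c : ℕ}
    (h : Attains ι m b) (h' : Attains κ m c) : Attains (ι ⊕ κ) m (b + c) := by
  obtain ⟨W, h1, h2, h3⟩ := h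
  obtain ⟨W', h1', h2', h3'⟩ := h'
  refine ⟨Matrix.fromBlocks W 0 0 W', ?_, ?_, fun x => ?_⟩
  · rintro (i | i)
    · exact h1 i
    · exact h1' i
  · rintro (j | j)
    · rw [hammingNorm_sum]
      have h0 : hammingNorm (fun _ : κ => (0 : ZMod 2)) = 0 := hammingNorm_zero
      simpa [h0] using h2 j
    · rw [hammingNorm_sum]
      have h0 : hammingNorm (fun _ : ι => (0 : ZMod 2)) = 0 := hammingNorm_zero
      simpa [h0] using h2' j
  · rw [hammingNorm_sum, Matrix.fromBlocks_mulVec]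
    simpa using add_le_add (h3 (x ∘ Sum.inl)) (h3' (x ∘ Sum.inr))

lemma Attains.fin_add {p q m b c : ℕ} (h : Attains (Fin p) m b) (h' : Attains (Fin q) m c) :
    Attains (Fin (p + q)) m (b + c) :=
  (h.sum h').equiv finSumFinEquiv

/-- A linear form on `𝔽₂^(l+1)` is nonzero at no more than half of the points. -/
lemma card_dotProduct_ne_zero_le (l : ℕ) (c : Fin (l + 1) → ZMod 2) :
    (Finset.univ.filter fun v : Fin (l + 1) → ZMod 2 => v ⬝ᵥ c ≠ 0).card ≤ 2 ^ l := by
  by_cases hc : c = 0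
  · simp [hc]
  obtain ⟨i, hi⟩ := Function.ne_iff.mp hc
  have hone : ∀ a : ZMod 2, a ≠ 0 → a = 1 := by decide
  have hle : (Finset.univ.filter fun v : Fin (l + 1) → ZMod 2 => v ⬝ᵥ c ≠ 0).card ≤
      (Finset.univ.filter fun v : Fin (l + 1) → ZMod 2 => ¬ v ⬝ᵥ c ≠ 0).card := by
    -- translation by the `i`-th unit vector changes the value of the form
    refine Finset.card_le_card_of_injOn (fun v => v + Pi.single i 1) ?_ ?_
    · intro v hv
      have hv' : v ⬝ᵥ c = 1 := hone _ (by simpa using hv)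
      have hci : c i = 1 := hone _ hi
      simp only [Finset.coe_filter, Finset.mem_univ, true_and, Set.mem_ofPred_eq, not_not]
      rw [add_dotProduct, hv', single_dotProduct, hci]
      decide
    · intro v _ w _ h
      exact add_right_cancel h
  have htot := Finset.card_filter_add_card_filter_not (s := Finset.univ)
    (fun v : Fin (l + 1) → ZMod 2 => v ⬝ᵥ c ≠ 0)
  have hcard : (Finset.univ : Finset (Fin (l + 1) → ZMod 2)).card = 2 * 2 ^ l := by
    simp [pow_succ, mul_comm]
  omega

/-- The simplex code: rows are the nonzero `v ∈ 𝔽₂^(l+1)`, every column is a coordinate function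
`v ↦ v i`, and the column of index `w` uses a coordinate at which `w` does not vanish. -/
lemma attains_simplex (l m : ℕ) (hm : 2 ^ l ≤ m) : Attains (Fin (2 ^ (l + 1) - 1)) m (2 ^ l) := by
  have hone : ∀ a : ZMod 2, a ≠ 0 → a = 1 := by decide
  have hex : ∀ w : {v : Fin (l + 1) → ZMod 2 // v ≠ 0}, ∃ i, w.1 i = 1 := fun w => by
    obtain ⟨i, hi⟩ := Function.ne_iff.mp w.2
    exact ⟨i, hone _ hi⟩
  choose φ hφ using hex
  have hnorm : ∀ c : Fin (l + 1) → ZMod 2,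
      hammingNorm (fun v : {v : Fin (l + 1) → ZMod 2 // v ≠ 0} => v.1 ⬝ᵥ c) ≤ 2 ^ l := by
    intro c
    refine le_trans ?_ (card_dotProduct_ne_zero_le l c)
    unfold hammingNorm
    refine Finset.card_le_card_of_injOn Subtype.val ?_ Subtype.val_injective.injOn
    intro v hv
    simpa using hv
  have hA : Attains {v : Fin (l + 1) → ZMod 2 // v ≠ 0} m (2 ^ l) := by
    refine ⟨fun v w => v.1 (φ w), fun w => hφ w, fun w => ?_, fun x => ?_⟩
    · refine le_trans ?_ hm
      simpa [dotProduct_single] using hnorm (Pi.single (φ w) 1)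
    · refine le_trans (le_of_eq ?_) (hnorm fun i => ∑ w, if φ w = i then x w else 0)
      congr 1
      funext v
      simp only [Matrix.mulVec, dotProduct, Finset.mul_sum]
      rw [Finset.sum_comm]
      simp
  refine hA.equiv (Fintype.equivFinOfCardEq ?_)
  simp [Fintype.card_subtype_compl]

lemma attains_aseq (k r : ℕ) (hr : r < 2 ^ (k + 1)) : Attains (Fin r) (2 ^ k) (aseq r) := by
  induction r using Nat.strong_induction_on with
  | _ r ih =>
    rcases Nat.eq_zero_or_pos r with rfl | hpos
    · exact ⟨0, fun i => i.elim0, fun j => j.elim0, fun x => by simp [hammingNorm]⟩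
    · obtain ⟨l, i, hi, rfl⟩ := exists_mersenne_add r hpos
      have hl := two_pow_sub_one_pos l
      have hlk : l ≤ k := by
        by_contra hc
        have : 2 ^ (k + 1) ≤ 2 ^ l := Nat.pow_le_pow_right (by norm_num) (by omega)
        have h3 : 2 ^ (l + 1) = 2 * 2 ^ l := by ring
        have h2 : 1 ≤ 2 ^ l := Nat.one_le_two_pow
        omega
      rw [aseq_add l i hi]
      exact (attains_simplex l _ (Nat.pow_le_pow_right (by norm_num) hlk)).fin_add
        (ih i (by omega) (by omega))

lemma attains_Ubd (k n : ℕ) : Attains (Fin n) (2 ^ k) (Ubd k n) := by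
  have hp := two_pow_sub_one_pos k
  have key : ∀ q, Attains (Fin (q * (2 ^ (k + 1) - 1))) (2 ^ k) (q * 2 ^ k) := by
    intro q
    induction q with
    | zero =>
      rw [Nat.zero_mul, Nat.zero_mul]
      simpa only [aseq_zero] using attains_aseq k 0 (by positivity)
    | succ q ih =>
      rw [Nat.succ_mul, Nat.succ_mul]
      exact ih.fin_add (attains_simplex k _ le_rfl)
  have h := (key (n / (2 ^ (k + 1) - 1))).fin_add
    (attains_aseq k (n % (2 ^ (k + 1) - 1)) (by have := Nat.mod_lt n hp; omega))
  rwa [Nat.div_add_mod'] at h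

lemma exists_Mfun_le_Ubd (k n : ℕ) : ∃ W ∈ Aset n (2 ^ k), Mfun W 0 ≤ Ubd k n := by
  obtain ⟨W, h1, h2, h3⟩ := attains_Ubd k n
  exact ⟨W, ⟨h1, h2⟩, Finset.sup_le fun x _ => by simpa using h3 x⟩
/-! ### Selecting columns of large weight -/

/-- Among finite sets of size at most `m + 1`, select `P` and `Q` as follows. `P` is a largest
family of pairwise disjoint sets of size `m + 1`. Outside the union `T` of `P`, the sets of `Q`
have size `m` and are pairwise disjoint, and `Q` is a largest such family. Then no set has `m` or
more points outside `T` and the sets of `Q`. Moreover the sets of `Q` meet each `S u`, `u ∈ P`,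
in at most one common point: if two of them met `S u` in different points, they would be disjoint
and of size `m + 1`, and exchanging `u` for both would enlarge `P`. -/
lemma exists_large_families {ι α : Type} [Fintype ι] [DecidableEq ι] [DecidableEq α]
    (S : ι → Finset α) (m : ℕ) (hm : 1 ≤ m) (hS : ∀ j, (S j).card ≤ m + 1) :
    ∃ P Q : Finset ι,
      (∀ u ∈ P, (S u).card = m + 1) ∧
      (∀ u ∈ P, ∀ v ∈ P, u ≠ v → Disjoint (S u) (S v)) ∧
      (∀ v ∈ Q, (S v \ P.biUnion S).card = m) ∧
      (∀ u ∈ Q, ∀ v ∈ Q, u ≠ v → Disjoint (S u \ P.biUnion S) (S v \ P.biUnion S)) ∧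
      (∀ j, ((S j \ P.biUnion S) \ Q.biUnion fun v => S v \ P.biUnion S).card < m) ∧
      (∀ u ∈ P, ∃ p, ∀ v ∈ Q, ∀ x ∈ S v, x ∈ S u → x = p) := by
  classical
  obtain ⟨P, hP, hPmax⟩ := Finset.exists_max_image
    (Finset.univ.filter fun P : Finset ι => (∀ u ∈ P, (S u).card = m + 1) ∧
      ∀ u ∈ P, ∀ v ∈ P, u ≠ v → Disjoint (S u) (S v)) Finset.card ⟨∅, by simp⟩
  obtain ⟨hP1, hP2⟩ := (Finset.mem_filter.mp hP).2
  have hPmax' : ∀ P' : Finset ι, (∀ u ∈ P', (S u).card = m + 1) →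
      (∀ u ∈ P', ∀ v ∈ P', u ≠ v → Disjoint (S u) (S v)) → P'.card ≤ P.card :=
    fun P' h1 h2 => hPmax P' (by simpa using ⟨h1, h2⟩)
  clear hP hPmax
  obtain ⟨Q, hQ, hQmax⟩ := Finset.exists_max_image
    (Finset.univ.filter fun Q : Finset ι => (∀ v ∈ Q, (S v \ P.biUnion S).card = m) ∧
      ∀ u ∈ Q, ∀ v ∈ Q, u ≠ v → Disjoint (S u \ P.biUnion S) (S v \ P.biUnion S))
    Finset.card ⟨∅, by simp⟩
  obtain ⟨hQ1, hQ2⟩ := (Finset.mem_filter.mp hQ).2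
  have hQmax' : ∀ Q' : Finset ι, (∀ v ∈ Q', (S v \ P.biUnion S).card = m) →
      (∀ u ∈ Q', ∀ v ∈ Q', u ≠ v → Disjoint (S u \ P.biUnion S) (S v \ P.biUnion S)) →
      Q'.card ≤ Q.card :=
    fun Q' h1 h2 => hQmax Q' (by simpa using ⟨h1, h2⟩)
  clear hQ hQmax
  refine ⟨P, Q, hP1, hP2, hQ1, hQ2, fun j => ?_, fun u hu => ?_⟩
  · by_contra! hj
    have hle : ((S j \ P.biUnion S) \ Q.biUnion fun v => S v \ P.biUnion S).card ≤
        (S j \ P.biUnion S).card := Finset.card_le_card Finset.sdiff_subset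
    have hle' : (S j \ P.biUnion S).card ≤ (S j).card := Finset.card_le_card Finset.sdiff_subset
    have hSj := hS j
    -- otherwise `j` could be added to `P`
    have hcard : (S j \ P.biUnion S).card = m := by
      by_contra hne
      have heq : S j \ P.biUnion S = S j :=
        Finset.eq_of_subset_of_card_le Finset.sdiff_subset (by omega)
      have hdisj : ∀ u ∈ P, Disjoint (S j) (S u) := fun u hu =>
        (Finset.sdiff_eq_self_iff_disjoint.mp heq).mono_right (Finset.subset_biUnion_of_mem S hu)
      have hjP : j ∉ P := fun hjP => by
        have h0 : (S j).card = 0 := by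
          rw [Finset.card_eq_zero]
          exact Finset.disjoint_self_iff_empty _ |>.mp (hdisj j hjP)
        omega
      have := hPmax' (insert j P)
        (by
          intro u hu
          rcases Finset.mem_insert.mp hu with rfl | hu
          · omega
          · exact hP1 u hu)
        (by
          intro u hu v hv huv
          rcases Finset.mem_insert.mp hu with rfl | hu' <;>
            rcases Finset.mem_insert.mp hv with rfl | hv'
          · exact absurd rfl huv
          · exact hdisj v hv'
          · exact (hdisj u hu').symm
          · exact hP2 u hu' v hv' huv)
      rw [Finset.card_insert_of_notMem hjP] at this
      omega
    have heq : (S j \ P.biUnion S) \ (Q.biUnion fun v => S v \ P.biUnion S) =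
        S j \ P.biUnion S :=
      Finset.eq_of_subset_of_card_le Finset.sdiff_subset (by omega)
    have hdisj : ∀ v ∈ Q, Disjoint (S j \ P.biUnion S) (S v \ P.biUnion S) := fun v hv =>
      (Finset.sdiff_eq_self_iff_disjoint.mp heq).mono_right
        (Finset.subset_biUnion_of_mem (fun v => S v \ P.biUnion S) hv)
    have hjQ : j ∉ Q := fun hjQ => by
      have h0 : (S j \ P.biUnion S).card = 0 := by
        rw [Finset.card_eq_zero]
        exact Finset.disjoint_self_iff_empty _ |>.mp (hdisj j hjQ)
      omega
    have := hQmax' (insert j Q)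
      (by
        intro u hu
        rcases Finset.mem_insert.mp hu with rfl | hu
        · exact hcard
        · exact hQ1 u hu)
      (by
        intro u hu v hv huv
        rcases Finset.mem_insert.mp hu with rfl | hu' <;>
          rcases Finset.mem_insert.mp hv with rfl | hv'
        · exact absurd rfl huv
        · exact hdisj v hv'
        · exact (hdisj u hu').symm
        · exact hQ2 u hu' v hv' huv)
    rw [Finset.card_insert_of_notMem hjQ] at this
    omega
  · by_cases hex : ∃ v ∈ Q, ∃ x ∈ S v, x ∈ S u
    swap
    · obtain ⟨p, -⟩ := Finset.card_pos.mp (by rw [hP1 u hu]; omega : 0 < (S u).card)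
      exact ⟨p, fun v hv x hx hxu => absurd ⟨v, hv, x, hx, hxu⟩ hex⟩
    obtain ⟨v₀, hv₀, p, hp, hpu⟩ := hex
    have hsum : ∀ v, (S v \ P.biUnion S).card + (S v ∩ P.biUnion S).card = (S v).card :=
      fun v => Finset.card_sdiff_add_card_inter _ _
    have hone : ∀ v ∈ Q, ∀ x ∈ S v, ∀ y ∈ S v, x ∈ P.biUnion S → y ∈ P.biUnion S → x = y := by
      intro v hv x hx y hy hxT hyT
      have h1 : (S v ∩ P.biUnion S).card ≤ 1 := by
        have := hsum v; have := hS v; have := hQ1 v hv; omega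
      exact Finset.card_le_one.mp h1 x (Finset.mem_inter.mpr ⟨hx, hxT⟩) y
        (Finset.mem_inter.mpr ⟨hy, hyT⟩)
    have hfull : ∀ v ∈ Q, ∀ x ∈ S v, x ∈ P.biUnion S → (S v).card = m + 1 := by
      intro v hv x hx hxT
      have : 0 < (S v ∩ P.biUnion S).card :=
        Finset.card_pos.mpr ⟨x, Finset.mem_inter.mpr ⟨hx, hxT⟩⟩
      have := hsum v; have := hS v; have := hQ1 v hv; omega
    have hTu : ∀ x ∈ S u, x ∈ P.biUnion S := fun x hx => Finset.mem_biUnion.mpr ⟨u, hu, hx⟩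
    -- a set of `Q` meeting `S u` is disjoint from the other sets of `P`
    have hother : ∀ v ∈ Q, ∀ x ∈ S v, x ∈ S u → ∀ w ∈ P.erase u, Disjoint (S v) (S w) := by
      intro v hv x hx hxu w hw
      obtain ⟨hwu, hwP⟩ := Finset.mem_erase.mp hw
      rw [Finset.disjoint_left]
      intro y hy hyw
      have hxy := hone v hv x hx y hy (hTu x hxu) (Finset.mem_biUnion.mpr ⟨w, hwP, hyw⟩)
      subst hxy
      exact Finset.disjoint_left.mp (hP2 w hwP u hu hwu) hyw hxu
    have hQP : ∀ v ∈ Q, v ∉ P := by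
      intro v hv hvP
      have h0 : S v \ P.biUnion S = ∅ :=
        Finset.sdiff_eq_empty_iff_subset.mpr (Finset.subset_biUnion_of_mem S hvP)
      have := hQ1 v hv
      rw [h0, Finset.card_empty] at this
      omega
    refine ⟨p, fun v hv x hx hxu => ?_⟩
    by_contra hxp
    have hvv₀ : v ≠ v₀ := by
      rintro rfl
      exact hxp (hone v hv x hx p hp (hTu x hxu) (hTu p hpu))
    have hdisj : Disjoint (S v) (S v₀) := by
      rw [Finset.disjoint_left]
      intro y hy hy₀
      by_cases hyT : y ∈ P.biUnion S
      · exact hxp ((hone v hv x hx y hy (hTu x hxu) hyT).trans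
          (hone v₀ hv₀ y hy₀ p hp hyT (hTu p hpu)))
      · exact Finset.disjoint_left.mp (hQ2 v hv v₀ hv₀ hvv₀) (Finset.mem_sdiff.mpr ⟨hy, hyT⟩)
          (Finset.mem_sdiff.mpr ⟨hy₀, hyT⟩)
    have hn1 : v₀ ∉ P.erase u := fun h => hQP v₀ hv₀ (Finset.mem_of_mem_erase h)
    have hn2 : v ∉ insert v₀ (P.erase u) := fun h => by
      rcases Finset.mem_insert.mp h with h | h
      · exact hvv₀ h
      · exact hQP v hv (Finset.mem_of_mem_erase h)
    have := hPmax' (insert v (insert v₀ (P.erase u)))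
      (by
        intro w hw
        rcases Finset.mem_insert.mp hw with rfl | hw
        · exact hfull w hv x hx (hTu x hxu)
        rcases Finset.mem_insert.mp hw with rfl | hw
        · exact hfull w hv₀ p hp (hTu p hpu)
        · exact hP1 w (Finset.mem_of_mem_erase hw))
      (by
        have hv' := hother v hv x hx hxu
        have hv₀' := hother v₀ hv₀ p hp hpu
        intro a ha b hb hab
        simp only [Finset.mem_insert] at ha hb
        rcases ha with rfl | rfl | ha <;> rcases hb with rfl | rfl | hb
        · exact absurd rfl hab
        · exact hdisj
        · exact hv' b hb
        · exact hdisj.symm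
        · exact absurd rfl hab
        · exact hv₀' b hb
        · exact (hv' a ha).symm
        · exact (hv₀' a ha).symm
        · exact hP2 a (Finset.mem_of_mem_erase ha) b (Finset.mem_of_mem_erase hb) hab)
    rw [Finset.card_insert_of_notMem hn2, Finset.card_insert_of_notMem hn1,
      Finset.card_erase_of_mem hu] at this
    have : 0 < P.card := Finset.card_pos.mpr ⟨u, hu⟩
    omega

/-! ### Lower bounds on the weight of column combinations -/

/-- Add to the combination `x` some of the columns in `F` so that at least half of each `B j` is
lit. Column `j ∈ F` is `1` on all of `B j` and vanishes on `A` and on the other sets `B j'`, so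
that these choices are independent and do not disturb `A`. -/
lemma exists_half {α : Type} [Fintype α] [DecidableEq α] (W : Matrix α α (ZMod 2))
    (A : Finset α) (B : α → Finset α) (F : Finset α) (x : α → ZMod 2)
    (hB : ∀ j ∈ F, ∀ i ∈ B j, W i j ≠ 0) (hA : ∀ j ∈ F, ∀ i ∈ A, W i j = 0)
    (hd : ∀ j ∈ F, ∀ j' ∈ F, j ≠ j' → ∀ i ∈ B j', W i j = 0) :
    ∃ x', (∀ i ∈ A, W.mulVec x' i = W.mulVec x i) ∧
      ∀ j ∈ F, (B j).card ≤ 2 * ((B j).filter fun i => W.mulVec x' i ≠ 0).card := by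
  induction F using Finset.induction_on with
  | empty => exact ⟨x, by simp, by simp⟩
  | insert j F hj ih =>
    obtain ⟨x₁, h1, h2⟩ := ih (fun k hk => hB k (Finset.mem_insert_of_mem hk))
      (fun k hk => hA k (Finset.mem_insert_of_mem hk))
      (fun k hk k' hk' => hd k (Finset.mem_insert_of_mem hk) k' (Finset.mem_insert_of_mem hk'))
    have hjF := Finset.mem_insert_self j F
    by_cases hc : (B j).card ≤ 2 * ((B j).filter fun i => W.mulVec x₁ i ≠ 0).card
    · refine ⟨x₁, h1, fun k hk => ?_⟩
      rcases Finset.mem_insert.mp hk with rfl | hk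
      · exact hc
      · exact h2 k hk
    · have hval : ∀ i, W.mulVec (x₁ + Pi.single j 1) i = W.mulVec x₁ i + W i j := by
        intro i
        simp [Matrix.mulVec_add]
      refine ⟨x₁ + Pi.single j 1, fun i hi => ?_, fun k hk => ?_⟩
      · rw [hval, hA j hjF i hi, add_zero, h1 i hi]
      · rcases Finset.mem_insert.mp hk with rfl | hk
        · have hflip : ((B k).filter fun i => W.mulVec (x₁ + Pi.single k 1) i ≠ 0) =
              (B k).filter fun i => ¬ W.mulVec x₁ i ≠ 0 := by
            refine Finset.filter_congr fun i hi => ?_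
            have hW := hB k hjF i hi
            rw [hval]
            revert hW
            generalize W i k = a
            generalize W.mulVec x₁ i = b
            revert a b
            decide
          have := Finset.card_filter_add_card_filter_not (s := B k)
            (fun i => W.mulVec x₁ i ≠ 0)
          rw [hflip]
          omega
        · have hkj : j ≠ k := fun h => hj (h ▸ hk)
          refine (h2 k hk).trans_eq ?_
          congr 2
          refine Finset.filter_congr fun i hi => ?_
          rw [hval, hd j hjF k (Finset.mem_insert_of_mem hk) hkj i hi, add_zero]

/-- The principal submatrix on `R` lies in `A(|R|, m)`, whence a combination of the columns in `R`
that lights at least `μ(|R|, m)` rows of `R`. -/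
lemma exists_mu_le {n m : ℕ} (W : Matrix (Fin n) (Fin n) (ZMod 2)) (hW : ∀ i, W i i = 1)
    (R : Finset (Fin n)) (hR : ∀ j ∈ R, (R.filter fun i => W i j ≠ 0).card ≤ m) :
    ∃ x, mu R.card m ≤ (R.filter fun i => W.mulVec x i ≠ 0).card := by
  set f := R.orderEmbOfFin rfl with hf
  have himg : Finset.univ.map f.toEmbedding = R := by
    ext a
    rw [← Finset.mem_coe (s := R), ← Finset.range_orderEmbOfFin R rfl]
    simp [hf]
  have hcount : ∀ p : Fin n → Prop, ∀ [DecidablePred p],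
      (Finset.univ.filter fun i => p (f i)).card = (R.filter p).card := by
    intro p _
    conv_rhs => rw [← himg, Finset.filter_map, Finset.card_map]
    rfl
  have hmem : W.submatrix f f ∈ Aset R.card m := by
    refine ⟨fun i => hW _, fun j => ?_⟩
    have := hR (f j) (Finset.orderEmbOfFin_mem R rfl j)
    rw [← hcount] at this
    exact this
  have hmu : mu R.card m ≤ Mfun (W.submatrix f f) 0 := Nat.sInf_le ⟨_, hmem, rfl⟩
  obtain ⟨z, -, hz⟩ := Finset.exists_mem_eq_sup Finset.univ Finset.univ_nonempty
    fun x : Fin R.card → ZMod 2 => hammingNorm ((W.submatrix f f).mulVec x + 0)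
  refine ⟨fun a => ∑ i, if f i = a then z i else 0, ?_⟩
  rw [← hcount]
  refine (hmu.trans_eq hz).trans_eq ?_
  rw [add_zero]
  unfold hammingNorm
  congr 1
  refine Finset.filter_congr fun i _ => ?_
  have : W.mulVec (fun a => ∑ i, if f i = a then z i else 0) (f i) =
      (W.submatrix f f).mulVec z i := by
    simp only [Matrix.mulVec, dotProduct, Finset.mul_sum]
    rw [Finset.sum_comm]
    simp
  rw [this]

lemma card_lit_le_Mfun {n : ℕ} (W : Matrix (Fin n) (Fin n) (ZMod 2)) (x : Fin n → ZMod 2)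
    (Z : Finset (Fin n)) (hZ : ∀ i ∈ Z, W.mulVec x i ≠ 0) : Z.card ≤ Mfun W 0 := by
  refine le_trans ?_ (Finset.le_sup (f := fun x => hammingNorm (W.mulVec x + 0))
    (Finset.mem_univ x))
  rw [add_zero]
  exact Finset.card_le_card fun i hi => by simpa using hZ i hi

/-- The lower bound. With `P`, `Q` as in `exists_large_families`, if `|P| + |Q|` exceeds the
quotient `n / (2^(j+2) - 1)`, the sum of all columns in `P ∪ Q` is heavy enough. Otherwise
light `U(·, 2^(j+1) - 1)` of the rows missed by `P` and `Q`, and then at least half of the rows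
of each block of `Q` and of `P`, in this order. -/
lemma Ubd_le_Mfun (j n : ℕ)
    (h : ∀ n : ℕ, 1 ≤ n → mu n (2 ^ (j + 1) - 1) = Ufun n (2 ^ (j + 1) - 1))
    (W : Matrix (Fin n) (Fin n) (ZMod 2)) (hW : W ∈ Aset n (2 ^ (j + 1) + 1)) :
    Ubd (j + 1) n ≤ Mfun W 0 := by
  obtain ⟨hdiag, hcol⟩ := hW
  have h2 : 1 ≤ 2 ^ j := Nat.one_le_two_pow
  have h3 : 2 ^ (j + 1) = 2 * 2 ^ j := by ring
  set S : Fin n → Finset (Fin n) := fun j => Finset.univ.filter fun i => W i j ≠ 0 with hSdef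
  have hmemS : ∀ i j, i ∈ S j ↔ W i j ≠ 0 := by simp [hSdef]
  have hnotS : ∀ i j, i ∉ S j → W i j = 0 := fun i j hi => by
    by_contra hc
    exact hi ((hmemS i j).mpr hc)
  obtain ⟨P, Q, hP1, hP2, hQ1, hQ2, hsmall, hstray⟩ :=
    exists_large_families S (2 ^ (j + 1)) (by omega) hcol
  set T := P.biUnion S with hT
  set B : Fin n → Finset (Fin n) := fun v => S v \ T with hB
  have hST : ∀ u ∈ P, ∀ i ∈ S u, i ∈ T := fun u hu i hi => Finset.mem_biUnion.mpr ⟨u, hu, hi⟩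
  have hBS : ∀ v i, i ∈ B v ↔ i ∈ S v ∧ i ∉ T := fun v i => Finset.mem_sdiff
  have hTQ : Disjoint T (Q.biUnion B) := by
    rw [Finset.disjoint_left]
    intro i hi hiQ
    obtain ⟨v, -, hv⟩ := Finset.mem_biUnion.mp hiQ
    exact ((hBS v i).mp hv).2 hi
  have hcardT : T.card = P.card * (2 ^ (j + 1) + 1) := by
    rw [hT, Finset.card_biUnion hP2, Finset.sum_congr rfl hP1, Finset.sum_const, smul_eq_mul]
  have hcardQ : (Q.biUnion B).card = Q.card * 2 ^ (j + 1) := by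
    rw [Finset.card_biUnion hQ2, Finset.sum_congr rfl hQ1, Finset.sum_const, smul_eq_mul]
  by_cases hJ : P.card + Q.card ≤ n / (2 ^ (j + 2) - 1)
  · set R : Finset (Fin n) := (T ∪ Q.biUnion B)ᶜ with hR
    have hRmem : ∀ i, i ∈ R ↔ i ∉ T ∧ i ∉ Q.biUnion B := fun i => by
      simp only [hR, Finset.mem_compl, Finset.mem_union, not_or]
    have hcardR : R.card + P.card * (2 ^ (j + 1) + 1) + Q.card * 2 ^ (j + 1) = n := by
      have h5 := Finset.card_add_card_compl (T ∪ Q.biUnion B)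
      rw [Finset.card_union_of_disjoint hTQ, hcardT, hcardQ, Fintype.card_fin, ← hR] at h5
      omega
    refine (Ubd_le_of_few j n P.card Q.card R.card hcardR hJ).trans ?_
    obtain ⟨x₀, hx₀⟩ : ∃ x, Ubd j R.card ≤ (R.filter fun i => W.mulVec x i ≠ 0).card := by
      rcases Nat.eq_zero_or_pos R.card with h0 | hpos
      · exact ⟨0, by rw [h0, Ubd_of_lt (two_pow_sub_one_pos j), aseq_zero]; exact Nat.zero_le _⟩
      · rw [← Ufun_eq_Ubd hpos (show 2 ^ j ≤ 2 ^ (j + 1) - 1 by omega) (by omega), ← h _ hpos]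
        refine exists_mu_le W hdiag R fun i _ => ?_
        have h6 := hsmall i
        have h7 : (R.filter fun a => W a i ≠ 0).card ≤
            ((S i \ T) \ Q.biUnion B).card := by
          refine Finset.card_le_card fun a ha => ?_
          obtain ⟨haR, hai⟩ := Finset.mem_filter.mp ha
          obtain ⟨ha1, ha2⟩ := (hRmem a).mp haR
          exact Finset.mem_sdiff.mpr ⟨Finset.mem_sdiff.mpr ⟨(hmemS a i).mpr hai, ha1⟩, ha2⟩
        omega
    obtain ⟨x₁, hx₁R, hx₁Q⟩ := exists_half W R B Q x₀
      (fun v _ i hi => (hmemS i v).mp ((hBS v i).mp hi).1)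
      (fun v hv i hi => hnotS i v fun hiv =>
        ((hRmem i).mp hi).2
          (Finset.mem_biUnion.mpr ⟨v, hv, (hBS v i).mpr ⟨hiv, ((hRmem i).mp hi).1⟩⟩))
      (fun v hv v' hv' hne i hi => hnotS i v fun hiv =>
        Finset.disjoint_left.mp (hQ2 v hv v' hv' hne)
          ((hBS v i).mpr ⟨hiv, ((hBS v' i).mp hi).2⟩) hi)
    obtain ⟨x₂, hx₂A, hx₂P⟩ := exists_half W (R ∪ Q.biUnion B) S P x₁
      (fun u _ i hi => (hmemS i u).mp hi)
      (fun u hu i hi => hnotS i u fun hiu => by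
        rcases Finset.mem_union.mp hi with hi | hi
        · exact ((hRmem i).mp hi).1 (hST u hu i hiu)
        · exact Finset.disjoint_left.mp hTQ (hST u hu i hiu) hi)
      (fun u hu u' hu' hne i hi => hnotS i u fun hiu =>
        Finset.disjoint_left.mp (hP2 u hu u' hu' hne) hiu hi)
    have hlit := card_lit_le_Mfun W x₂ (Finset.univ.filter fun i => W.mulVec x₂ i ≠ 0)
      (fun i hi => (Finset.mem_filter.mp hi).2)
    have hsplit : (Finset.univ : Finset (Fin n)) = R ∪ (T ∪ Q.biUnion B) := by
      rw [hR, Finset.union_comm, Finset.union_compl]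
    have hdR : Disjoint R (T ∪ Q.biUnion B) := by
      rw [hR]
      exact disjoint_compl_left
    rw [hsplit, Finset.filter_union, Finset.filter_union,
      Finset.card_union_of_disjoint, Finset.card_union_of_disjoint] at hlit
    rotate_left
    · exact Finset.disjoint_filter_filter hTQ
    · rw [← Finset.filter_union]
      exact Finset.disjoint_filter_filter hdR
    have hlitR : Ubd j R.card ≤ (R.filter fun i => W.mulVec x₂ i ≠ 0).card := by
      refine hx₀.trans_eq (congrArg Finset.card (Finset.filter_congr fun i hi => ?_))
      rw [hx₂A i (Finset.mem_union_left _ hi), hx₁R i hi]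
    have hlitP : P.card * (2 ^ j + 1) ≤ (T.filter fun i => W.mulVec x₂ i ≠ 0).card := by
      rw [hT, Finset.filter_biUnion, Finset.card_biUnion fun u hu v hv huv =>
        Finset.disjoint_filter_filter (hP2 u hu v hv huv), ← smul_eq_mul]
      -- half of the odd number `2^(j+1) + 1`, rounded up
      refine Finset.card_nsmul_le_sum _ _ _ fun u hu => ?_
      have := hx₂P u hu
      rw [hP1 u hu] at this
      omega
    have hlitQ : Q.card * 2 ^ j ≤ ((Q.biUnion B).filter fun i => W.mulVec x₂ i ≠ 0).card := by
      have hcongr : ((Q.biUnion B).filter fun i => W.mulVec x₂ i ≠ 0) =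
          (Q.biUnion B).filter fun i => W.mulVec x₁ i ≠ 0 :=
        Finset.filter_congr fun i hi => by rw [hx₂A i (Finset.mem_union_right _ hi)]
      rw [hcongr, Finset.filter_biUnion, Finset.card_biUnion fun u hu v hv huv =>
        Finset.disjoint_filter_filter (hQ2 u hu v hv huv), ← smul_eq_mul]
      refine Finset.card_nsmul_le_sum _ _ _ fun u hu => ?_
      have h8 := hx₁Q u hu
      have h9 : (B u).card = 2 ^ (j + 1) := hQ1 u hu
      change 2 ^ j ≤ ((B u).filter fun i => W.mulVec x₁ i ≠ 0).card
      omega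
    omega
  · have hU : Ubd (j + 1) n ≤ (P.card + Q.card) * 2 ^ (j + 1) := by
      have hlt := Nat.mod_lt n (two_pow_sub_one_pos (j + 1))
      have ha := aseq_le (j + 1) (n % (2 ^ (j + 1 + 1) - 1)) hlt.le
      have hmul : (n / (2 ^ (j + 2) - 1) + 1) * 2 ^ (j + 1) ≤ (P.card + Q.card) * 2 ^ (j + 1) :=
        Nat.mul_le_mul_right _ (by omega)
      unfold Ubd
      change n / (2 ^ (j + 2) - 1) * 2 ^ (j + 1) + _ ≤ _
      rw [Nat.succ_mul] at hmul
      omega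
    have hp : ∀ u, ∃ p, u ∈ P → ∀ v ∈ Q, ∀ x ∈ S v, x ∈ S u → x = p := fun u => by
      by_cases hu : u ∈ P
      · obtain ⟨p, hp⟩ := hstray u hu
        exact ⟨p, fun _ => hp⟩
      · exact ⟨u, fun h => absurd h hu⟩
    choose p hp using hp
    have hval : ∀ i, W.mulVec (fun a => if a ∈ P ∪ Q then 1 else 0) i = ∑ a ∈ P ∪ Q, W i a := by
      intro i
      simp [Matrix.mulVec, dotProduct, Finset.sum_ite_mem, -Finset.mem_union]
    -- a row of a block other than the points `p u` is hit by exactly one column of `P ∪ Q`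
    have hlit := card_lit_le_Mfun W (fun a => if a ∈ P ∪ Q then 1 else 0)
      ((P.biUnion fun u => (S u).erase (p u)) ∪ Q.biUnion B) (by
        intro i hi
        rw [hval]
        rcases Finset.mem_union.mp hi with hi | hi
        · obtain ⟨u, hu, hiu⟩ := Finset.mem_biUnion.mp hi
          obtain ⟨hip, hiu⟩ := Finset.mem_erase.mp hiu
          rw [Finset.sum_eq_single_of_mem u (Finset.mem_union_left _ hu)]
          · exact (hmemS i u).mp hiu
          · intro v hv hvu
            refine hnotS i v fun hiv => ?_
            rcases Finset.mem_union.mp hv with hv | hv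
            · exact Finset.disjoint_left.mp (hP2 v hv u hu hvu) hiv hiu
            · exact hip (hp u hu v hv i hiv hiu)
        · obtain ⟨u, hu, hiu⟩ := Finset.mem_biUnion.mp hi
          obtain ⟨hiu, hiT⟩ := (hBS u i).mp hiu
          rw [Finset.sum_eq_single_of_mem u (Finset.mem_union_right _ hu)]
          · exact (hmemS i u).mp hiu
          · intro v hv hvu
            refine hnotS i v fun hiv => ?_
            rcases Finset.mem_union.mp hv with hv | hv
            · exact hiT (hST v hv i hiv)
            · exact Finset.disjoint_left.mp (hQ2 v hv u hu hvu)
                ((hBS v i).mpr ⟨hiv, hiT⟩) ((hBS u i).mpr ⟨hiu, hiT⟩))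
    have hsub : (P.biUnion fun u => (S u).erase (p u)) ⊆ T :=
      Finset.biUnion_mono fun u _ => Finset.erase_subset _ _
    have hcardP : P.card * 2 ^ (j + 1) ≤ (P.biUnion fun u => (S u).erase (p u)).card := by
      have hdisj : ∀ u ∈ P, ∀ v ∈ P, u ≠ v →
          Disjoint ((S u).erase (p u)) ((S v).erase (p v)) := fun u hu v hv huv =>
        (hP2 u hu v hv huv).mono (Finset.erase_subset _ _) (Finset.erase_subset _ _)
      rw [Finset.card_biUnion hdisj, ← smul_eq_mul]
      refine Finset.card_nsmul_le_sum _ _ _ fun u hu => ?_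
      have := Finset.pred_card_le_card_erase (s := S u) (a := p u)
      rw [hP1 u hu] at this
      exact this
    rw [Finset.card_union_of_disjoint (hTQ.mono_left hsub), hcardQ] at hlit
    rw [add_mul] at hU
    omega

/-- Theorem 5.2: if `m = 2^k` and `μ(·, m−1) = U(·, m−1)`, then `μ(·, p) = U(·, p)` for
`p = m` and `p = m+1`; in particular `μ(·, m) = μ(·, m+1)`. -/
theorem mu_eq_U_near_pow_two (k : ℕ) (hk : 1 ≤ k) (m : ℕ) (hm : m = 2 ^ k)
    (h : ∀ n : ℕ, 1 ≤ n → mu n (m - 1) = Ufun n (m - 1)) :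
    (∀ n : ℕ, 1 ≤ n → mu n m = Ufun n m ∧ mu n (m + 1) = Ufun n (m + 1)) ∧
    (∀ n : ℕ, 1 ≤ n → mu n m = mu n (m + 1)) := by
  obtain ⟨j, rfl⟩ : ∃ j, k = j + 1 := ⟨k - 1, by omega⟩
  subst hm
  have hpow : 2 ^ (j + 1 + 1) = 2 * 2 ^ (j + 1) := by ring
  have htwo : 2 ≤ 2 ^ (j + 1) := by
    have := Nat.one_le_two_pow (n := j)
    have : 2 ^ (j + 1) = 2 * 2 ^ j := by ring
    omega
  have hsub : ∀ n, Aset n (2 ^ (j + 1)) ⊆ Aset n (2 ^ (j + 1) + 1) := fun n W hW =>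
    ⟨hW.1, fun i => (hW.2 i).trans (Nat.le_succ _)⟩
  have key : ∀ n m, Aset n (2 ^ (j + 1)) ⊆ Aset n m → Aset n m ⊆ Aset n (2 ^ (j + 1) + 1) →
      mu n m = Ubd (j + 1) n := by
    intro n m h1 h2
    obtain ⟨W, hW, hWle⟩ := exists_Mfun_le_Ubd (j + 1) n
    refine le_antisymm ((Nat.sInf_le (Set.mem_image_of_mem _ (h1 hW))).trans hWle) ?_
    refine le_csInf (Set.Nonempty.image _ ⟨W, h1 hW⟩) ?_
    rintro _ ⟨V, hV, rfl⟩
    exact Ubd_le_Mfun j n h V (h2 hV)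
  have k1 := fun n => key n _ subset_rfl (hsub n)
  have k2 := fun n => key n _ (hsub n) subset_rfl
  refine ⟨fun n hn => ⟨?_, ?_⟩, fun n _ => (k1 n).trans (k2 n).symm⟩
  · rw [k1, Ufun_eq_Ubd hn le_rfl (by omega)]
  · rw [k2, Ufun_eq_Ubd hn (Nat.le_succ _) (by omega)]
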